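/- Let n ≥ 1 and let A and B be n×n Hermitian complex matrices. Define, for real M, U(M) = inf { Re(Tr(ρA)) : ρ is a density matrix with Re(Tr(ρB)) = M }. Then for every real γ, λ_min(A − γB) = inf { U(M) − γM : M ∈ [λ_min(B), λ_max(B)] }. (The ground-state energy is the Legendre transformation of the constrained minimum energy.) -/

import Mathlib

/-!
In an eigenbasis of a Hermitian matrix `H`, the diagonal of a density matrix `ρ` is a probability
vector and `Re Tr (ρ H)` is the corresponding average of the eigenvalues of `H`
(`IsDensityMatrix.exists_weights`). Conversely every probability vector arises this way
(`exists_density_of_weights`). Hence `Re Tr (ρ H)` takes values in `[λ_min H, λ_max H]`, both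
endpoints are attained, and by convexity of the set of density matrices so is every value in
between (`exists_density_of_mem_Icc`).

Put `H = A - γ B`, so that `Re Tr (ρ H) = Re Tr (ρ A) - γ M` whenever `Re Tr (ρ B) = M`. Every such
`ρ` gives `λ_min H + γ M ≤ Re Tr (ρ A)`; for `M ∈ [λ_min B, λ_max B]` there is at least one, so
`λ_min H ≤ U(M) - γ M`. For the other inequality, take a ground state `ρ` of `H`
and `M = Re Tr (ρ B)`: then `U(M) - γ M ≤ Re Tr (ρ H) = λ_min H`.
-/


open Matrix ComplexOrder

/-- The smallest eigenvalue of a (Hermitian) matrix. -/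
noncomputable def lamMin {n : ℕ} (A : Matrix (Fin n) (Fin n) ℂ) : ℝ :=
  if hA : A.IsHermitian then ⨅ i, hA.eigenvalues i else 0

/-- The largest eigenvalue of a (Hermitian) matrix. -/
noncomputable def lamMax {n : ℕ} (A : Matrix (Fin n) (Fin n) ℂ) : ℝ :=
  if hA : A.IsHermitian then ⨆ i, hA.eigenvalues i else 0

/-- A density matrix: positive semidefinite with trace one. -/
def IsDensityMatrix {ι : Type*} [Fintype ι] (ρ : Matrix ι ι ℂ) : Prop :=
  ρ.PosSemidef ∧ ρ.trace = 1

/-- The constrained minimum energy `U(M)`. -/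
noncomputable def constrainedMin {n : ℕ} (A B : Matrix (Fin n) (Fin n) ℂ) (M : ℝ) : ℝ :=
  sInf {x : ℝ | ∃ ρ : Matrix (Fin n) (Fin n) ℂ,
    IsDensityMatrix ρ ∧ ((ρ * B).trace).re = M ∧ x = ((ρ * A).trace).re}

section
variable {n : ℕ}

/-- The energy of a state is an average of the eigenvalues; the weights are the diagonal
entries of the state in an eigenbasis of `H`. -/
lemma IsDensityMatrix.exists_weights {H ρ : Matrix (Fin n) (Fin n) ℂ} (hH : H.IsHermitian)
    (hρ : IsDensityMatrix ρ) :
    ∃ w : Fin n → ℝ, (∀ i, 0 ≤ w i) ∧ ∑ i, w i = 1 ∧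
      ((ρ * H).trace).re = ∑ i, w i * hH.eigenvalues i := by
  set U : Matrix (Fin n) (Fin n) ℂ := hH.eigenvectorUnitary.1
  have hUU : U * star U = 1 := Unitary.coe_mul_star_self hH.eigenvectorUnitary
  have hpos : (star U * ρ * U).PosSemidef := hρ.1.conjTranspose_mul_mul_same U
  have hsp : H = U * diagonal (fun i => (hH.eigenvalues i : ℂ)) * star U := by
    simpa [Unitary.conjStarAlgAut_apply, Function.comp_def] using hH.spectral_theorem
  refine ⟨fun i => ((star U * ρ * U) i i).re, fun i => ?_, ?_, ?_⟩
  · exact (Complex.le_def.1 (hpos.diag_nonneg (i := i))).1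
  · have h : (star U * ρ * U).trace = 1 := by
      rw [trace_mul_cycle, hUU, one_mul, hρ.2]
    simpa [trace] using congrArg Complex.re h
  · have h : (ρ * H).trace
        = (star U * ρ * U * diagonal (fun i => (hH.eigenvalues i : ℂ))).trace := by
      conv_lhs => rw [hsp]
      rw [← mul_assoc, trace_mul_comm]
      simp only [mul_assoc]
    rw [h]
    simp [trace, mul_diagonal]

/-- Every mixture of eigenvectors of `H` is a state, whose energy is the corresponding average
of the eigenvalues. -/
lemma exists_density_of_weights {H : Matrix (Fin n) (Fin n) ℂ} (hH : H.IsHermitian)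
    (w : Fin n → ℝ) (hw : ∀ i, 0 ≤ w i) (hw1 : ∑ i, w i = 1) :
    ∃ ρ, IsDensityMatrix ρ ∧ ((ρ * H).trace).re = ∑ i, w i * hH.eigenvalues i := by
  set U : Matrix (Fin n) (Fin n) ℂ := hH.eigenvectorUnitary.1
  have hUU : star U * U = 1 := Unitary.coe_star_mul_self hH.eigenvectorUnitary
  have hsp : H = U * diagonal (fun i => (hH.eigenvalues i : ℂ)) * star U := by
    simpa [Unitary.conjStarAlgAut_apply, Function.comp_def] using hH.spectral_theorem
  refine ⟨U * diagonal (fun i => (w i : ℂ)) * star U, ⟨?_, ?_⟩, ?_⟩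
  · refine PosSemidef.mul_mul_conjTranspose_same (PosSemidef.diagonal fun i => ?_) U
    simpa using hw i
  · rw [trace_mul_cycle, hUU, one_mul, trace_diagonal]
    exact_mod_cast hw1
  · have h : (U * diagonal (fun i => (w i : ℂ)) * star U * H).trace
        = (diagonal (fun i => (w i : ℂ)) * diagonal (fun i => (hH.eigenvalues i : ℂ))).trace := by
      conv_lhs => rw [hsp]
      calc _ = (U * (diagonal (fun i => (w i : ℂ)) * (star U * U)
                * diagonal (fun i => (hH.eigenvalues i : ℂ))) * star U).trace := by
              simp only [mul_assoc]
        _ = _ := by rw [trace_mul_cycle, hUU, one_mul, mul_one]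
    rw [h, diagonal_mul_diagonal, trace_diagonal]
    simp

lemma IsDensityMatrix.lamMin_le {H ρ : Matrix (Fin n) (Fin n) ℂ} (hH : H.IsHermitian)
    (hρ : IsDensityMatrix ρ) : lamMin H ≤ ((ρ * H).trace).re := by
  obtain ⟨w, hw, hw1, h⟩ := hρ.exists_weights hH
  rw [h, lamMin, dif_pos hH, ← one_mul (⨅ i, _), ← hw1, Finset.sum_mul]
  exact Finset.sum_le_sum fun i _ =>
    mul_le_mul_of_nonneg_left (ciInf_le (Set.finite_range _).bddBelow i) (hw i)

lemma IsDensityMatrix.le_lamMax {H ρ : Matrix (Fin n) (Fin n) ℂ} (hH : H.IsHermitian)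
    (hρ : IsDensityMatrix ρ) : ((ρ * H).trace).re ≤ lamMax H := by
  obtain ⟨w, hw, hw1, h⟩ := hρ.exists_weights hH
  rw [h, lamMax, dif_pos hH, ← one_mul (⨆ i, _), ← hw1, Finset.sum_mul]
  exact Finset.sum_le_sum fun i _ =>
    mul_le_mul_of_nonneg_left (le_ciSup (Set.finite_range _).bddAbove i) (hw i)

lemma exists_density_eigenvalue {H : Matrix (Fin n) (Fin n) ℂ} (hH : H.IsHermitian) (i : Fin n) :
    ∃ ρ, IsDensityMatrix ρ ∧ ((ρ * H).trace).re = hH.eigenvalues i := by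
  obtain ⟨ρ, hρ, h⟩ := exists_density_of_weights hH (Pi.single i 1)
    (fun j => (Pi.single_nonneg.2 zero_le_one : (0 : Fin n → ℝ) ≤ _) j) (by simp)
  exact ⟨ρ, hρ, by simpa [Pi.single_apply] using h⟩

lemma exists_density_lamMin (hn : 1 ≤ n) {H : Matrix (Fin n) (Fin n) ℂ} (hH : H.IsHermitian) :
    ∃ ρ, IsDensityMatrix ρ ∧ ((ρ * H).trace).re = lamMin H := by
  have : Nonempty (Fin n) := ⟨⟨0, hn⟩⟩
  obtain ⟨i, hi⟩ := exists_eq_ciInf_of_finite (f := hH.eigenvalues)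
  rw [lamMin, dif_pos hH, ← hi]
  exact exists_density_eigenvalue hH i

lemma exists_density_lamMax (hn : 1 ≤ n) {H : Matrix (Fin n) (Fin n) ℂ} (hH : H.IsHermitian) :
    ∃ ρ, IsDensityMatrix ρ ∧ ((ρ * H).trace).re = lamMax H := by
  have : Nonempty (Fin n) := ⟨⟨0, hn⟩⟩
  obtain ⟨i, hi⟩ := exists_eq_ciSup_of_finite (f := hH.eigenvalues)
  rw [lamMax, dif_pos hH, ← hi]
  exact exists_density_eigenvalue hH i

/-- The constraint `Re Tr (ρ H) = M` is feasible for `M ∈ [λ_min H, λ_max H]`: mix a state of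
minimal and a state of maximal energy. -/
lemma exists_density_of_mem_Icc (hn : 1 ≤ n) {H : Matrix (Fin n) (Fin n) ℂ} (hH : H.IsHermitian)
    {M : ℝ} (hM : M ∈ Set.Icc (lamMin H) (lamMax H)) :
    ∃ ρ, IsDensityMatrix ρ ∧ ((ρ * H).trace).re = M := by
  obtain ⟨ρ₁, h₁, e₁⟩ := exists_density_lamMin hn hH
  obtain ⟨ρ₂, h₂, e₂⟩ := exists_density_lamMax hn hH
  rw [← segment_eq_Icc (hM.1.trans hM.2)] at hM
  obtain ⟨a, b, ha, hb, hab, rfl⟩ := hM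
  refine ⟨(a : ℂ) • ρ₁ + (b : ℂ) • ρ₂, ⟨?_, ?_⟩, ?_⟩
  · exact (h₁.1.smul (by simpa using ha)).add (h₂.1.smul (by simpa using hb))
  · simp only [trace_add, trace_smul, h₁.2, h₂.2, smul_eq_mul, mul_one]
    exact_mod_cast hab
  · simp [add_mul, e₁, e₂]

end

/-- The ground-state energy is the Legendre transformation of the constrained
minimum energy: `λ_min (A - γ B) = inf { U(M) - γ M : M ∈ [λ_min B, λ_max B] }`. -/
theorem stmt5 {n : ℕ} (hn : 1 ≤ n) (A B : Matrix (Fin n) (Fin n) ℂ)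
    (hA : A.IsHermitian) (hB : B.IsHermitian) (γ : ℝ) :
    lamMin (A - γ • B)
      = sInf {y : ℝ | ∃ M ∈ Set.Icc (lamMin B) (lamMax B),
          y = constrainedMin A B M - γ * M} := by
  have hH : (A - γ • B).IsHermitian := hA.sub (hB.smul (IsSelfAdjoint.all γ))
  have htr (ρ : Matrix (Fin n) (Fin n) ℂ) :
      ((ρ * (A - γ • B)).trace).re = ((ρ * A).trace).re - γ * ((ρ * B).trace).re := by
    simp [mul_sub, trace_sub, trace_smul]
  have hlow : ∀ y ∈ {y : ℝ | ∃ M ∈ Set.Icc (lamMin B) (lamMax B),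
      y = constrainedMin A B M - γ * M}, lamMin (A - γ • B) ≤ y := by
    rintro y ⟨M, hM, rfl⟩
    rw [le_sub_iff_add_le]
    -- Feasibility of the constraint rules out the default value `sInf ∅ = 0`.
    obtain ⟨ρ₀, hρ₀, hρ₀M⟩ := exists_density_of_mem_Icc hn hB hM
    refine le_csInf ⟨_, ρ₀, hρ₀, hρ₀M, rfl⟩ ?_
    rintro x ⟨ρ, hρ, rfl, rfl⟩
    have := hρ.lamMin_le hH
    rw [htr] at this
    linarith
  -- A ground state of `A - γ B`; its `B`-value is the optimal `M`.
  obtain ⟨ρ, hρ, hρH⟩ := exists_density_lamMin hn hH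
  have hmem : ((ρ * B).trace).re ∈ Set.Icc (lamMin B) (lamMax B) :=
    ⟨hρ.lamMin_le hB, hρ.le_lamMax hB⟩
  refine le_antisymm (le_csInf ⟨_, _, hmem, rfl⟩ hlow) ?_
  refine (csInf_le ⟨_, hlow⟩ ⟨_, hmem, rfl⟩).trans ?_
  rw [← hρH, htr]
  refine sub_le_sub_right ?_ _
  refine csInf_le ⟨lamMin A, ?_⟩ ⟨ρ, hρ, rfl, rfl⟩
  rintro x ⟨σ, hσ, -, rfl⟩
  exact hσ.lamMin_le hA
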